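/- Let X be a real Banach space that is uniformly convex and uniformly smooth, let 1 < p < ∞, and let M, N be closed linear subspaces of X such that the pair (M,N) is boundedly linear Bregman regular. Then for every x ∈ X, the sequence defined by x₀ = x, x_{2n+1} = Π^p_M x_{2n}, x_{2n} = Π^p_N x_{2n−1} converges in norm to Π^p_{M∩N} x. If, in addition, X is ρ-convex and σ-smooth with σ ≤ p ≤ ρ, then there exist constants C > 0 and q ∈ (0,1) with D_p(Π^p_{M∩N} x, x_n) ≤ C q^n for all n, and there exist C' > 0 and q' ∈ (0,1) with ‖Π^p_{M∩N} x − x_n‖ ≤ C' (q')^n for all n; that is, the convergence is linear. -/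

import Mathlib

open Filter Topology

noncomputable section

/-- The modulus of convexity of a normed space `X`. -/
def modConvex (X : Type*) [NormedAddCommGroup X] (ε : ℝ) : ℝ :=
  sInf {d : ℝ | ∃ x y : X, ‖x‖ = 1 ∧ ‖y‖ = 1 ∧ ε ≤ ‖x - y‖ ∧ d = 1 - ‖x + y‖ / 2}

/-- The modulus of smoothness of a normed space `X`. -/
def modSmooth (X : Type*) [NormedAddCommGroup X] [NormedSpace ℝ X] (τ : ℝ) : ℝ :=
  sSup {d : ℝ | ∃ x y : X, ‖x‖ = 1 ∧ ‖y‖ = 1 ∧ d = (‖x + τ • y‖ + ‖x - τ • y‖) / 2 - 1}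

/-- `X` is uniformly convex: the modulus of convexity is positive for positive ε. -/
def UnifConvex (X : Type*) [NormedAddCommGroup X] : Prop :=
  ∀ ε : ℝ, 0 < ε → ε ≤ 2 → 0 < modConvex X ε

/-- `X` is uniformly smooth: `ρ_X(τ)/τ → 0` as `τ → 0⁺`. -/
def UnifSmooth (X : Type*) [NormedAddCommGroup X] [NormedSpace ℝ X] : Prop :=
  Tendsto (fun τ => modSmooth X τ / τ) (𝓝[>] (0 : ℝ)) (𝓝 0)

/-- `X` is uniformly convex of power type `ρ`. -/
def PowerConvex (X : Type*) [NormedAddCommGroup X] (ρ : ℝ) : Prop :=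
  ∃ c > (0 : ℝ), ∀ ε ∈ Set.Icc (0 : ℝ) 2, c * ε ^ ρ ≤ modConvex X ε

/-- `X` is uniformly smooth of power type `σ` (with `σ > 1`). -/
def PowerSmooth (X : Type*) [NormedAddCommGroup X] [NormedSpace ℝ X] (σ : ℝ) : Prop :=
  1 < σ ∧ ∃ C > (0 : ℝ), ∀ τ ∈ Set.Icc (0 : ℝ) 1, modSmooth X τ ≤ C * τ ^ σ

variable {X : Type*} [NormedAddCommGroup X] [NormedSpace ℝ X]

/-- The duality mapping `j_p`, the Fréchet derivative of `x ↦ (1/p)‖x‖^p`. -/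
def dualityMap (p : ℝ) (x : X) : X →L[ℝ] ℝ :=
  fderiv ℝ (fun y : X => 1 / p * ‖y‖ ^ p) x

/-- The Bregman distance `D_p(x, y)`. -/
def bregmanDist (p : ℝ) (x y : X) : ℝ :=
  1 / p * ‖x‖ ^ p - 1 / p * ‖y‖ ^ p - dualityMap p y (x - y)

/-- The Bregman projection of `x` onto the set `S`: the minimizer of `m ↦ D_p(m, x)` over `S`. -/
def bregmanProj (p : ℝ) (S : Set X) (x : X) : X :=
  letI : Nonempty X := ⟨x⟩
  Classical.epsilon fun y => y ∈ S ∧ ∀ m ∈ S, bregmanDist p y x ≤ bregmanDist p m x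

/-- The Bregman distance `D_p(S, x)` from the point `x` to the set `S`. -/
def bregmanDistSet (p : ℝ) (S : Set X) (x : X) : ℝ :=
  bregmanDist p (bregmanProj p S x) x

/-- The metric projection of `x` onto the set `S`: the point of `S` nearest to `x`. -/
def metricProj (S : Set X) (x : X) : X :=
  letI : Nonempty X := ⟨x⟩
  Classical.epsilon fun y => y ∈ S ∧ ∀ m ∈ S, ‖x - y‖ ≤ ‖x - m‖

/-- The pair `(M, N)` is Bregman regular. -/
def BregmanRegular (p : ℝ) {X : Type*} [NormedAddCommGroup X] [NormedSpace ℝ X]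
    (M N : Submodule ℝ X) : Prop :=
  ∀ ε > (0 : ℝ), ∃ δ > (0 : ℝ), ∀ x : X,
    max (bregmanDistSet p (M : Set X) x) (bregmanDistSet p (N : Set X) x) < δ →
      bregmanDistSet p ((M ⊓ N : Submodule ℝ X) : Set X) x < ε

/-- The pair `(M, N)` is linear Bregman regular. -/
def LinearBregmanRegular (p : ℝ) {X : Type*} [NormedAddCommGroup X] [NormedSpace ℝ X]
    (M N : Submodule ℝ X) : Prop :=
  ∃ κ > (0 : ℝ), ∀ x : X,
    bregmanDistSet p ((M ⊓ N : Submodule ℝ X) : Set X) x ≤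
      κ * max (bregmanDistSet p (M : Set X) x) (bregmanDistSet p (N : Set X) x)

/-- The pair `(M, N)` is boundedly linear Bregman regular. -/
def BoundedlyLinearBregmanRegular (p : ℝ) {X : Type*} [NormedAddCommGroup X] [NormedSpace ℝ X]
    (M N : Submodule ℝ X) : Prop :=
  ∀ S : Set X, Bornology.IsBounded S → ∃ κ > (0 : ℝ), ∀ x ∈ S,
    bregmanDistSet p ((M ⊓ N : Submodule ℝ X) : Set X) x ≤
      κ * max (bregmanDistSet p (M : Set X) x) (bregmanDistSet p (N : Set X) x)

/-!
If `M` is a closed subspace and `m ∈ M`, the first-order condition `j_p(Π_M x) = j_p(x)` on `M`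
gives the Pythagorean identity `D_p(m, x) = D_p(m, Π_M x) + D_p(Π_M x, x)`. Moreover
`Π_P (Π_M x) = Π_P x` for every subspace `P ≤ M`, so that all iterates have the same projection `z`
onto `M ∩ N`, and `D_p(z, ·)` decreases in each step by the distance of the current iterate to the
subspace it is about to be projected onto. An iterate already lies in the other subspace, so
regularity bounds `D_p(z, x_n)` by `κ` times this decrease; hence `D_p(z, x_n)` decays
geometrically with ratio `κ / (κ + 1)`.

To pass from Bregman distances to norms, the function `‖·‖ ^ p` is shown to be uniformly convex on
bounded sets: at points with distance `t` in the ball of radius `R`, its midpoint convexity gap is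
at least a constant times `t ^ (p + 1) * δ_X(t / (2 * R))`. This bounds `D_p(u, v)` from below by
the same function of `t = ‖u - v‖`, and a modulus of power type turns the geometric decay of the
Bregman distances into geometric decay of the norms.
-/

section Scalar

theorem rpow_eq_rpow_sub_one_mul {p t : ℝ} (hp : p ≠ 0) (ht : 0 ≤ t) :
    t ^ p = t ^ (p - 1) * t := by
  rw [← Real.rpow_add_one' ht (by simpa using hp), sub_add_cancel]

theorem rpow_add_mul_sub_le_rpow {p s u : ℝ} (hp : 1 < p) (hs : 0 ≤ s) (hu : 0 ≤ u) :
    u ^ p + p * u ^ (p - 1) * (s - u) ≤ s ^ p := by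
  have hp0 : 0 < p := one_pos.trans hp
  have hpq := Real.HolderConjugate.conjExponent hp
  have young := Real.young_inequality_of_nonneg hs (Real.rpow_nonneg hu (p - 1)) hpq
  rw [← Real.rpow_mul hu, hpq.sub_one_mul_conj, div_eq_mul_inv _ p.conjExponent,
    ← hpq.one_sub_inv] at young
  have scaled := mul_le_mul_of_nonneg_left young hp0.le
  have split : p * (s ^ p / p + u ^ p * (1 - p⁻¹)) = s ^ p + (p - 1) * u ^ p := by
    field_simp
  rw [split] at scaled
  linear_combination scaled + p * rpow_eq_rpow_sub_one_mul hp0.ne' hu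

theorem rpow_sub_one_mul_sub_le {p u v : ℝ} (hp : 1 ≤ p) (hv : 0 ≤ v) (hvu : v ≤ u) :
    u ^ (p - 1) * (u - v) ≤ u ^ p - v ^ p := by
  have hp0 : p ≠ 0 := by positivity
  have hmono : v ^ (p - 1) ≤ u ^ (p - 1) := Real.rpow_le_rpow hv hvu (sub_nonneg.2 hp)
  rw [rpow_eq_rpow_sub_one_mul hp0 hv, rpow_eq_rpow_sub_one_mul hp0 (hv.trans hvu)]
  linear_combination mul_le_mul_of_nonneg_right hmono hv

theorem rpow_le_one_sub_min_mul {α θ : ℝ} (hα : 0 ≤ α) (h0 : 0 ≤ θ) (h1 : θ ≤ 1) :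
    θ ^ α ≤ 1 - min α 1 * (1 - θ) := by
  rcases le_total α 1 with h | h
  · have bernoulli := rpow_one_add_le_one_add_mul_self (s := θ - 1) (by linarith) hα h
    rw [add_sub_cancel] at bernoulli
    rw [min_eq_left h]
    linarith
  · rw [min_eq_right h]
    linarith [Real.rpow_le_self_of_le_one h0 h1 h]

theorem min_mul_sub_rpow_div_le_rpow_sub_rpow {α R u w : ℝ} (hα : 0 < α) (hu : 0 ≤ u)
    (huw : u ≤ w) (hwR : w ≤ R) :
    min α 1 * (w - u) ^ (α + 1) / R ≤ w ^ α - u ^ α := by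
  have hd : 0 ≤ w - u := sub_nonneg.2 huw
  rcases (hu.trans huw).eq_or_lt with rfl | hw
  · simp [le_antisymm huw hu, Real.zero_rpow (by positivity : α + 1 ≠ 0)]
  have ratio : (u / w) ^ α ≤ 1 - min α 1 * (1 - u / w) :=
    rpow_le_one_sub_min_mul hα.le (by positivity) ((div_le_one hw).2 huw)
  rw [Real.div_rpow hu hw.le, div_le_iff₀ (by positivity)] at ratio
  have : 0 ≤ min α 1 := by positivity
  have hR : 0 < R := hw.trans_le hwR
  calc min α 1 * (w - u) ^ (α + 1) / R
      = min α 1 * ((w - u) ^ α * ((w - u) / R)) := by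
        rw [Real.rpow_add_one' hd (by positivity)]; ring
    _ ≤ min α 1 * (w ^ α * ((w - u) / w)) := by gcongr; exact sub_le_self w hu
    _ = min α 1 * (1 - u / w) * w ^ α := by field_simp
    _ ≤ w ^ α - u ^ α := by linarith

-- `t ^ p` lies above its tangent at `(s + t) / 2`, and `s ^ p` above the tangent at the point
-- halfway from there to `s`; the gap is the increase of the slope between these two points.
theorem two_mul_half_add_rpow_add_le {p R s t : ℝ} (hp : 1 < p) (ht : 0 ≤ t) (hts : t ≤ s)
    (hsR : s ≤ R) :
    2 * ((s + t) / 2) ^ p + p * (min (p - 1) 1) / R * ((s - t) / 4) ^ (p + 1)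
      ≤ s ^ p + t ^ p := by
  set u := (s + t) / 2 with hu
  set d := (s - t) / 4 with hd
  have hu0 : 0 ≤ u := by linarith
  have hd0 : 0 ≤ d := by linarith
  have tangent_s := rpow_add_mul_sub_le_rpow hp (u := u + d) (ht.trans hts) (by linarith)
  have tangent_mid := rpow_add_mul_sub_le_rpow hp (s := u + d) (by linarith) hu0
  have tangent_t := rpow_add_mul_sub_le_rpow hp ht hu0
  rw [show s - (u + d) = d by linarith] at tangent_s
  rw [show u + d - u = d by ring] at tangent_mid
  rw [show t - u = -(2 * d) by linarith] at tangent_t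
  have slope_gap := min_mul_sub_rpow_div_le_rpow_sub_rpow (α := p - 1) (R := R) (by linarith) hu0
    (le_add_of_nonneg_right hd0) (by linarith)
  rw [add_sub_cancel_left, sub_add_cancel] at slope_gap
  have hpd : 0 ≤ p * d := mul_nonneg (by linarith) hd0
  rw [Real.rpow_add_one' hd0 (by linarith)]
  linear_combination tangent_s + tangent_mid + tangent_t
    + mul_le_mul_of_nonneg_left slope_gap hpd

end Scalar

/-- R-linear convergence to zero of a sequence of reals that is meant to be nonnegative: the
sequence is dominated by a null geometric sequence. -/
def DecaysGeometrically (u : ℕ → ℝ) : Prop :=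
  ∃ C > (0 : ℝ), ∃ q ∈ Set.Ioo (0 : ℝ) 1, ∀ n : ℕ, u n ≤ C * q ^ n

namespace DecaysGeometrically

variable {u v : ℕ → ℝ}

theorem of_le_mul {q : ℝ} (hq : q ∈ Set.Ioo (0 : ℝ) 1) (h : ∀ n, u (n + 2) ≤ q * u (n + 1)) :
    DecaysGeometrically u := by
  have hq0 : 0 < q := hq.1
  have tail (n : ℕ) : u (n + 1) ≤ q ^ n * u 1 :=
    le_geom (u := fun n => u (n + 1)) hq0.le n fun k _ => h k
  refine ⟨max 1 (max (u 0) (u 1 / q)), by positivity, q, hq, ?_⟩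
  rintro (_ | n)
  · simp
  · calc u (n + 1) ≤ u 1 / q * q ^ (n + 1) := by
          convert tail n using 1
          rw [pow_succ]
          field_simp
      _ ≤ _ := by
          gcongr
          exact (le_max_right _ _).trans (le_max_right _ _)

theorem tendsto_zero (hu : DecaysGeometrically u) (h0 : ∀ n, 0 ≤ u n) :
    Tendsto u atTop (𝓝 0) := by
  obtain ⟨C, -, q, hq, hle⟩ := hu
  have hgeom : Tendsto (fun n => C * q ^ n) atTop (𝓝 0) := by
    simpa using (tendsto_pow_atTop_nhds_zero_of_lt_one hq.1.le hq.2).const_mul C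
  exact squeeze_zero h0 hle hgeom

theorem of_mul_rpow_le {K r : ℝ} (hu : DecaysGeometrically u) (hK : 0 < K) (hr : 0 < r)
    (h0 : ∀ n, 0 ≤ v n) (h : ∀ n, K * v n ^ r ≤ u n) : DecaysGeometrically v := by
  obtain ⟨C, hC, q, ⟨hq0, hq1⟩, hle⟩ := hu
  have hr' : 0 < r⁻¹ := inv_pos.2 hr
  refine ⟨(C / K) ^ r⁻¹, by positivity, q ^ r⁻¹,
    ⟨by positivity, Real.rpow_lt_one hq0.le hq1 hr'⟩, fun n => ?_⟩
  have hvr : v n ^ r ≤ C / K * q ^ n := by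
    rw [div_mul_eq_mul_div, le_div_iff₀' hK]
    exact (h n).trans (hle n)
  calc v n ≤ (C / K * q ^ n) ^ r⁻¹ := (Real.le_rpow_inv_iff_of_pos (h0 n) (by positivity) hr).2 hvr
    _ = (C / K) ^ r⁻¹ * (q ^ r⁻¹) ^ n := by
      rw [Real.mul_rpow (by positivity) (by positivity), Real.rpow_pow_comm hq0.le]

end DecaysGeometrically

section ModulusOfConvexity

variable {E : Type*} [NormedAddCommGroup E] {ε ε' : ℝ}

theorem modConvex_le {x y : E} (hx : ‖x‖ = 1) (hy : ‖y‖ = 1) (h : ε ≤ ‖x - y‖) :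
    modConvex E ε ≤ 1 - ‖x + y‖ / 2 := by
  refine csInf_le ⟨0, ?_⟩ ⟨x, y, hx, hy, h, rfl⟩
  rintro _ ⟨u, v, hu, hv, -, rfl⟩
  linarith [norm_add_le u v]

theorem modConvex_nonneg : 0 ≤ modConvex E ε := by
  refine Real.sInf_nonneg ?_
  rintro _ ⟨u, v, hu, hv, -, rfl⟩
  linarith [norm_add_le u v]

theorem modConvex_le_one : modConvex E ε ≤ 1 := by
  by_cases h : ∃ x y : E, ‖x‖ = 1 ∧ ‖y‖ = 1 ∧ ε ≤ ‖x - y‖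
  · obtain ⟨x, y, hx, hy, hxy⟩ := h
    linarith [modConvex_le hx hy hxy, norm_nonneg (x + y)]
  · refine (Real.sInf_nonpos ?_).trans zero_le_one
    rintro _ ⟨u, v, hu, hv, huv, -⟩
    exact absurd ⟨u, v, hu, hv, huv⟩ h

variable (X) in
theorem modConvex_zero : modConvex X 0 = 0 := by
  refine modConvex_nonneg.antisymm' ?_
  by_cases h : ∃ x : X, ‖x‖ = 1
  · obtain ⟨x, hx⟩ := h
    have norm_add_self : ‖x + x‖ = 2 := by
      rw [← two_smul ℝ, norm_smul, hx, Real.norm_two, mul_one]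
    simpa [norm_add_self] using modConvex_le (ε := 0) hx hx (norm_nonneg _)
  · refine Real.sInf_nonpos ?_
    rintro _ ⟨u, -, hu, -⟩
    exact absurd ⟨u, hu⟩ h

-- Positivity of the larger value excludes the junk infimum `sInf ∅ = 0`.
theorem modConvex_mono (hε' : 0 < modConvex E ε') (h : ε ≤ ε') :
    modConvex E ε ≤ modConvex E ε' := by
  refine le_csInf ?_ ?_
  · rw [Set.nonempty_iff_ne_empty]
    intro hempty
    rw [modConvex, hempty, Real.sInf_empty] at hε'
    exact hε'.false
  · rintro _ ⟨u, v, hu, hv, huv, rfl⟩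
    exact modConvex_le hu hv (h.trans huv)

theorem PowerConvex.exponent_pos {ρ : ℝ} (h : PowerConvex X ρ) : 0 < ρ := by
  obtain ⟨c, hc, hle⟩ := h
  by_contra! hρ
  rcases hρ.eq_or_lt with rfl | hρ
  · have := hle 0 (by simp)
    rw [Real.rpow_zero, mul_one, modConvex_zero] at this
    exact this.not_gt hc
  · have large : ∀ᶠ t : ℝ in 𝓝[>] 0, c⁻¹ < t ^ ρ :=
      (tendsto_rpow_neg_nhdsGT_zero hρ).eventually_gt_atTop c⁻¹
    obtain ⟨t, ht, hlt⟩ := (large.and (Ioo_mem_nhdsGT two_pos)).exists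
    have : 1 < c * t ^ ρ := by rwa [inv_lt_iff_one_lt_mul₀' hc] at ht
    linarith [hle t ⟨hlt.1.le, hlt.2.le⟩, modConvex_le_one (E := X) (ε := t)]

theorem norm_add_div_two_le_sub_mul_modConvex {y z : X} (hyz : ‖y‖ ≤ ‖z‖)
    (hε : ‖z‖ - ‖y‖ + ‖y‖ * ε ≤ ‖z - y‖) :
    ‖y + z‖ / 2 ≤ (‖y‖ + ‖z‖) / 2 - ‖y‖ * modConvex X ε := by
  rcases eq_or_ne y 0 with rfl | hy
  · simp
  have hy0 : 0 < ‖y‖ := norm_pos_iff.2 hy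
  have hz : z ≠ 0 := norm_pos_iff.1 (hy0.trans_le hyz)
  set y' := NormedSpace.normalize y
  set z' := NormedSpace.normalize z
  have y_eq : ‖y‖ • y' = y := NormedSpace.norm_smul_normalize y
  have z_eq : ‖z‖ • z' = z := NormedSpace.norm_smul_normalize z
  have norm_y' : ‖y'‖ = 1 := NormedSpace.norm_normalize hy
  have norm_z' : ‖z'‖ = 1 := NormedSpace.norm_normalize hz
  have norm_combination_le (w : X) :
      ‖(‖z‖ - ‖y‖) • z' + ‖y‖ • w‖ ≤ ‖z‖ - ‖y‖ + ‖y‖ * ‖w‖ := by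
    refine (norm_add_le _ _).trans_eq ?_
    rw [norm_smul _ z', norm_smul _ w, norm_z', mul_one, norm_norm,
      Real.norm_of_nonneg (sub_nonneg.2 hyz)]
  have sub_le : ‖z - y‖ ≤ ‖z‖ - ‖y‖ + ‖y‖ * ‖z' - y'‖ := by
    convert norm_combination_le (z' - y') using 2
    rw [sub_smul, smul_sub, y_eq, z_eq]
    abel
  have add_le : ‖y + z‖ ≤ ‖z‖ - ‖y‖ + ‖y‖ * ‖z' + y'‖ := by
    convert norm_combination_le (z' + y') using 2
    rw [sub_smul, smul_add, y_eq, z_eq]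
    abel
  have separated : ε ≤ ‖z' - y'‖ := le_of_mul_le_mul_left (by linarith) hy0
  linarith [mul_le_mul_of_nonneg_left (modConvex_le norm_z' norm_y' separated) hy0.le]

theorem two_mul_norm_rpow_add_le_of_norms_apart {p R : ℝ} {y z : E} (hp : 1 < p) (hR : 0 < R)
    (hz : ‖z‖ ≤ R) (hyz : ‖z - y‖ / 2 ≤ ‖z‖ - ‖y‖) :
    2 * (‖y + z‖ / 2) ^ p + p * min (p - 1) 1 / R * (‖z - y‖ / 8) ^ (p + 1)
      ≤ ‖y‖ ^ p + ‖z‖ ^ p := by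
  have hle : ‖y‖ ≤ ‖z‖ := by linarith [norm_nonneg (z - y)]
  have : 0 < min (p - 1) 1 := lt_min (sub_pos.2 hp) one_pos
  calc 2 * (‖y + z‖ / 2) ^ p + p * min (p - 1) 1 / R * (‖z - y‖ / 8) ^ (p + 1)
      ≤ 2 * ((‖z‖ + ‖y‖) / 2) ^ p + p * min (p - 1) 1 / R * ((‖z‖ - ‖y‖) / 4) ^ (p + 1) := by
        gcongr 2 * ?_ ^ p + _ * ?_ ^ _
        · linarith [norm_add_le y z]
        · linarith
    _ ≤ ‖z‖ ^ p + ‖y‖ ^ p := two_mul_half_add_rpow_add_le hp (norm_nonneg y) hle hz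
    _ = ‖y‖ ^ p + ‖z‖ ^ p := add_comm _ _

theorem two_mul_norm_rpow_add_le_of_norms_close {p R : ℝ} {y z : X} (hp : 1 < p) (hR : 0 < R)
    (hz : ‖z‖ ≤ R) (hle : ‖y‖ ≤ ‖z‖) (hyz : ‖z‖ - ‖y‖ ≤ ‖z - y‖ / 2) :
    2 * (‖y + z‖ / 2) ^ p + 2 * ((‖z - y‖ / 4) ^ p * modConvex X (‖z - y‖ / (2 * R)))
      ≤ ‖y‖ ^ p + ‖z‖ ^ p := by
  set d := ‖z - y‖ / 4 with hd
  set δ := modConvex X (‖z - y‖ / (2 * R))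
  set u := (‖y‖ + ‖z‖) / 2 with hu
  have hd0 : 0 ≤ d := by positivity
  have hδ0 : 0 ≤ δ := modConvex_nonneg
  have hdy : d ≤ ‖y‖ := by linarith [norm_sub_le z y]
  have mid_le : ‖y + z‖ / 2 ≤ u - ‖y‖ * δ := by
    refine norm_add_div_two_le_sub_mul_modConvex hle ?_
    have : ‖y‖ * (‖z - y‖ / (2 * R)) ≤ ‖z - y‖ / 2 := by
      rw [mul_div_assoc', div_le_iff₀ (by positivity)]
      linarith [mul_le_mul_of_nonneg_right (hle.trans hz) (norm_nonneg (z - y))]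
    linarith
  have gap_le : d * δ ≤ u - ‖y + z‖ / 2 := by
    linarith [mul_le_mul_of_nonneg_right hdy hδ0]
  have power_gap : d ^ p * δ ≤ u ^ p - (‖y + z‖ / 2) ^ p :=
    calc d ^ p * δ = d ^ (p - 1) * (d * δ) := by
          rw [rpow_eq_rpow_sub_one_mul (by linarith) hd0, mul_assoc]
      _ ≤ u ^ (p - 1) * (u - ‖y + z‖ / 2) := by
          gcongr
          linarith
      _ ≤ u ^ p - (‖y + z‖ / 2) ^ p :=
          rpow_sub_one_mul_sub_le hp.le (by positivity) (by linarith [norm_add_le y z])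
  have convex : u ^ p ≤ 1 / 2 * ‖y‖ ^ p + 1 / 2 * ‖z‖ ^ p := by
    have := (convexOn_rpow hp.le).2 (norm_nonneg y) (norm_nonneg z) one_half_pos.le
      one_half_pos.le (add_halves 1)
    simpa only [smul_eq_mul, one_div_mul_eq_div, hu, add_div] using this
  linarith

/-- A lower bound, up to a constant factor, for the modulus of convexity of `‖·‖ ^ p` on the ball
of radius `R`. Two points of this ball at distance `t` have `t / (2 * R) ∈ [0, 1]`, which is why
the modulus of convexity of the space is rescaled. -/
def powModConvex (E : Type*) [NormedAddCommGroup E] (p R t : ℝ) : ℝ :=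
  t ^ (p + 1) * modConvex E (t / (2 * R))

theorem powModConvex_nonneg {p R t : ℝ} (ht : 0 ≤ t) : 0 ≤ powModConvex E p R t :=
  mul_nonneg (Real.rpow_nonneg ht _) modConvex_nonneg

theorem powModConvex_le_rpow {p R t : ℝ} (ht : 0 ≤ t) : powModConvex E p R t ≤ t ^ (p + 1) :=
  mul_le_of_le_one_right (Real.rpow_nonneg ht _) modConvex_le_one

theorem powModConvex_le_mul_modConvex {p R t : ℝ} (hp : 0 ≤ p) (ht : t ∈ Set.Icc 0 (2 * R)) :
    powModConvex E p R t ≤ 2 * R * (t ^ p * modConvex E (t / (2 * R))) := by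
  have hδ : 0 ≤ modConvex E (t / (2 * R)) := modConvex_nonneg
  have htp : 0 ≤ t ^ p := Real.rpow_nonneg ht.1 p
  rw [powModConvex, Real.rpow_add_one' ht.1 (by positivity)]
  linear_combination mul_le_mul_of_nonneg_right ht.2 (mul_nonneg htp hδ)

theorem norm_midpoint_eq_norm_add_div_two (y z : X) : ‖midpoint ℝ y z‖ = ‖y + z‖ / 2 := by
  rw [midpoint_eq_smul_add, norm_smul, invOf_eq_inv, norm_inv, Real.norm_two, inv_mul_eq_div]

variable (X) in
theorem exists_two_mul_norm_midpoint_rpow_add_le {p R : ℝ} (hp : 1 < p) (hR : 0 < R) :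
    ∃ K > 0, ∀ y z : X, ‖y‖ ≤ R → ‖z‖ ≤ R →
      2 * ‖midpoint ℝ y z‖ ^ p + K * powModConvex X p R ‖z - y‖ ≤ ‖y‖ ^ p + ‖z‖ ^ p := by
  have hp0 : 0 < p := one_pos.trans hp
  set c := p * min (p - 1) 1 / R
  have : 0 < c := div_pos (mul_pos hp0 (lt_min (sub_pos.2 hp) one_pos)) hR
  refine ⟨min (c * (1 / 8) ^ (p + 1)) ((1 / 4) ^ p / R), by positivity, ?_⟩
  intro y z hy hz
  wlog hyz : ‖y‖ ≤ ‖z‖ generalizing y z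
  · rw [midpoint_comm, norm_sub_rev, add_comm (‖y‖ ^ p)]
    exact this z y hz hy (le_of_not_ge hyz)
  rw [norm_midpoint_eq_norm_add_div_two]
  set ε := ‖z - y‖
  have hε : ε ∈ Set.Icc 0 (2 * R) := ⟨norm_nonneg _, by linarith [norm_sub_le z y]⟩
  have hω : 0 ≤ powModConvex X p R ε := powModConvex_nonneg hε.1
  -- If the norms are far apart, the convexity of `t ↦ t ^ p` produces the gap; otherwise the
  -- directions of `y` and `z` are far apart, and the convexity of the space produces it.
  rcases le_total (ε / 2) (‖z‖ - ‖y‖) with apart | close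
  · refine le_trans ?_ (two_mul_norm_rpow_add_le_of_norms_apart hp hR hz apart)
    gcongr _ + ?_
    calc _ ≤ c * (1 / 8) ^ (p + 1) * ε ^ (p + 1) := by
          gcongr
          exacts [min_le_left _ _, powModConvex_le_rpow hε.1]
      _ = c * (ε / 8) ^ (p + 1) := by
          rw [mul_assoc, ← Real.mul_rpow (by norm_num) hε.1, one_div_mul_eq_div]
  · refine le_trans ?_ (two_mul_norm_rpow_add_le_of_norms_close hp hR hz hyz close)
    gcongr _ + ?_
    calc _ ≤ (1 / 4) ^ p / R * (2 * R * (ε ^ p * modConvex X (ε / (2 * R)))) := by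
          gcongr
          exacts [min_le_right _ _, powModConvex_le_mul_modConvex hp0.le hε]
      _ = 2 * ((1 / 4) ^ p * ε ^ p * modConvex X (ε / (2 * R))) := by field_simp
      _ = 2 * ((ε / 4) ^ p * modConvex X (ε / (2 * R))) := by
          rw [← Real.mul_rpow (by norm_num) hε.1, one_div_mul_eq_div]

theorem UnifConvex.tendsto_zero_of_powModConvex {ι : Type*} {l : Filter ι} {p R : ℝ} {t : ι → ℝ}
    (hconv : UnifConvex E) (hp : 0 ≤ p) (ht : ∀ i, t i ∈ Set.Icc 0 (2 * R))
    (h : Tendsto (fun i => powModConvex E p R (t i)) l (𝓝 0)) : Tendsto t l (𝓝 0) := by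
  refine tendsto_order.2 ⟨fun a ha => .of_forall fun i => ha.trans_le (ht i).1, fun ε hε => ?_⟩
  rcases lt_or_ge (2 * R) ε with hRε | hεR
  · exact .of_forall fun i => (ht i).2.trans_lt hRε
  have hR : 0 < 2 * R := hε.trans_le hεR
  have hδ : 0 < modConvex E (ε / (2 * R)) :=
    hconv _ (by positivity) (((div_le_one hR).2 hεR).trans one_le_two)
  have hη : 0 < powModConvex E p R ε := mul_pos (by positivity) hδ
  filter_upwards [h.eventually_lt_const hη] with i hi
  by_contra! hεt
  have hti : t i / (2 * R) ≤ 2 := ((div_le_one hR).2 (ht i).2).trans one_le_two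
  have hδi : 0 < modConvex E (t i / (2 * R)) := hconv _ (div_pos (hε.trans_le hεt) hR) hti
  refine hi.not_ge (mul_le_mul ?_ (modConvex_mono hδi ?_) hδ.le ?_)
  · gcongr
  · gcongr
  · exact Real.rpow_nonneg (ht i).1 _

theorem PowerConvex.mul_rpow_le_powModConvex {ρ p R : ℝ} (h : PowerConvex X ρ) (hp : 1 < p)
    (hR : 0 < R) :
    ∃ c > 0, ∀ t ∈ Set.Icc 0 (2 * R), c * t ^ (p + 1 + ρ) ≤ powModConvex X p R t := by
  have hρ : 0 < ρ := h.exponent_pos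
  obtain ⟨c, hc, hle⟩ := h
  refine ⟨c / (2 * R) ^ ρ, by positivity, fun t ⟨ht0, htR⟩ => ?_⟩
  have hle_t : c * (t / (2 * R)) ^ ρ ≤ modConvex X (t / (2 * R)) :=
    hle _ ⟨by positivity, ((div_le_one (by positivity)).2 htR).trans one_le_two⟩
  calc c / (2 * R) ^ ρ * t ^ (p + 1 + ρ) = t ^ (p + 1) * (c * (t / (2 * R)) ^ ρ) := by
        rw [Real.rpow_add_of_nonneg ht0 (by linarith) hρ.le, Real.div_rpow ht0 (by positivity)]
        ring
    _ ≤ t ^ (p + 1) * modConvex X (t / (2 * R)) := by gcongr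

end ModulusOfConvexity

section Smoothness

theorem norm_add_add_norm_sub_le {x h : X} (hx : x ≠ 0) (hh : h ≠ 0) :
    ‖x + h‖ + ‖x - h‖ ≤ 2 * ‖x‖ * (1 + modSmooth X (‖h‖ / ‖x‖)) := by
  have hx0 : 0 < ‖x‖ := norm_pos_iff.2 hx
  set τ := ‖h‖ / ‖x‖ with hτ
  set x' := NormedSpace.normalize x
  set h' := NormedSpace.normalize h
  have x_eq : ‖x‖ • x' = x := NormedSpace.norm_smul_normalize x
  have h_eq : ‖x‖ • τ • h' = h := by
    rw [smul_smul, hτ, mul_div_cancel₀ _ hx0.ne', NormedSpace.norm_smul_normalize]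
  have le_modSmooth : (‖x' + τ • h'‖ + ‖x' - τ • h'‖) / 2 - 1 ≤ modSmooth X τ := by
    refine le_csSup ⟨|τ|, ?_⟩
      ⟨x', h', NormedSpace.norm_normalize hx, NormedSpace.norm_normalize hh, rfl⟩
    rintro _ ⟨u, v, hu, hv, rfl⟩
    have hτv : ‖τ • v‖ = |τ| := by rw [norm_smul, hv, mul_one, Real.norm_eq_abs]
    linarith [norm_add_le u (τ • v), norm_sub_le u (τ • v)]
  calc ‖x + h‖ + ‖x - h‖ = ‖x‖ * ‖x' + τ • h'‖ + ‖x‖ * ‖x' - τ • h'‖ := by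
        nth_rewrite 1 2 [← x_eq, ← h_eq]
        rw [← smul_add, ← smul_sub, norm_smul, norm_smul, norm_norm]
    _ ≤ 2 * ‖x‖ * (1 + modSmooth X τ) := by
        linear_combination 2 * mul_le_mul_of_nonneg_left le_modSmooth hx0.le

variable (X) in
/-- The norm of `X` is Fréchet differentiable away from the origin. This consequence of uniform
smoothness is all that the geometry of Bregman projections uses on the smooth side. -/
def FrechetSmooth : Prop :=
  ∀ x : X, x ≠ 0 → DifferentiableAt ℝ (fun y : X => ‖y‖) x

-- A norming functional `g` of `x` is the derivative: `g h ≤ ‖x + h‖ - ‖x‖` and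
-- `-g h ≤ ‖x - h‖ - ‖x‖`, and the sum of the two right-hand sides is `o(‖h‖)`.
theorem UnifSmooth.frechetSmooth (hsmooth : UnifSmooth X) : FrechetSmooth X := by
  intro x hx
  have hx0 : 0 < ‖x‖ := norm_pos_iff.2 hx
  obtain ⟨g, hg, hgx⟩ : ∃ g : X →L[ℝ] ℝ, ‖g‖ ≤ 1 ∧ g x = ‖x‖ := exists_dual_vector'' ℝ x
  have g_le (y : X) : g y ≤ ‖y‖ := by
    simpa only [one_mul] using (le_abs_self _).trans (g.le_of_opNorm_le hg y)
  suffices HasFDerivAt (fun y : X => ‖y‖) g x from this.differentiableAt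
  rw [hasFDerivAt_iff_isLittleO_nhds_zero, Asymptotics.isLittleO_iff]
  intro c hc
  have small_ratio : Tendsto (fun h : X => ‖h‖ / ‖x‖) (𝓝[≠] 0) (𝓝[>] 0) := by
    refine tendsto_nhdsWithin_iff.2 ⟨?_, ?_⟩
    · have : Continuous fun h : X => ‖h‖ / ‖x‖ := by fun_prop
      simpa using (this.tendsto 0).mono_left nhdsWithin_le_nhds
    · filter_upwards [self_mem_nhdsWithin] with h hh
      exact div_pos (norm_pos_iff.2 hh) hx0
  have small := (hsmooth.comp small_ratio).eventually_lt_const (half_pos hc)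
  filter_upwards [eventually_nhdsWithin_iff.1 small] with h hsmall
  rcases eq_or_ne h 0 with rfl | hh
  · simp
  have hτ : 0 < ‖h‖ / ‖x‖ := div_pos (norm_pos_iff.2 hh) hx0
  have second_difference : ‖x + h‖ + ‖x - h‖ ≤ 2 * ‖x‖ + c * ‖h‖ := by
    have small_modSmooth : modSmooth X (‖h‖ / ‖x‖) ≤ c / 2 * (‖h‖ / ‖x‖) :=
      ((div_lt_iff₀ hτ).1 (hsmall hh)).le
    calc ‖x + h‖ + ‖x - h‖ ≤ 2 * ‖x‖ * (1 + modSmooth X (‖h‖ / ‖x‖)) :=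
          norm_add_add_norm_sub_le hx hh
      _ ≤ 2 * ‖x‖ * (1 + c / 2 * (‖h‖ / ‖x‖)) := by gcongr
      _ = 2 * ‖x‖ + c * ‖h‖ := by field_simp
  have lower := g_le (x + h)
  have upper := g_le (x - h)
  rw [map_add, hgx] at lower
  rw [map_sub, hgx] at upper
  rw [Real.norm_of_nonneg (by linarith)]
  linarith

theorem hasFDerivAt_norm_rpow_zero {p : ℝ} (hp : 1 < p) :
    HasFDerivAt (fun y : X => ‖y‖ ^ p) (0 : X →L[ℝ] ℝ) 0 := by
  have hp0 : p ≠ 0 := by positivity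
  have norm_rpow_tendsto : Tendsto (fun h : X => ‖h‖ ^ (p - 1)) (𝓝 0) (𝓝 0) := by
    have := (continuous_norm (E := X)).rpow_const (p := p - 1) fun _ => .inr (sub_pos.2 hp).le
    simpa [(sub_pos.2 hp).ne'] using this.tendsto 0
  have product_isLittleO : (fun h : X => ‖h‖ ^ (p - 1) * ‖h‖) =o[𝓝 0] fun h => ‖h‖ := by
    simpa only [one_mul] using ((Asymptotics.isLittleO_one_iff ℝ).2 norm_rpow_tendsto).mul_isBigO
      (Asymptotics.isBigO_refl (fun h : X => ‖h‖) _)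
  rw [hasFDerivAt_iff_isLittleO_nhds_zero]
  simpa [hp0, rpow_eq_rpow_sub_one_mul hp0 (norm_nonneg _)] using product_isLittleO.of_norm_right

variable {p : ℝ}

theorem hasFDerivAt_dualityMap (hX : FrechetSmooth X) (hp : 1 < p) (x : X) :
    HasFDerivAt (fun y : X => 1 / p * ‖y‖ ^ p) (dualityMap p x) x := by
  refine (DifferentiableAt.const_mul ?_ _).hasFDerivAt
  rcases eq_or_ne x 0 with rfl | hx
  · exact (hasFDerivAt_norm_rpow_zero hp).differentiableAt
  · exact (hX x hx).rpow_const (.inl (norm_ne_zero_iff.2 hx))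

theorem dualityMap_zero (hp : 1 < p) : dualityMap p (0 : X) = 0 := by
  rw [dualityMap]
  simpa only [smul_zero] using ((hasFDerivAt_norm_rpow_zero hp).const_mul (1 / p)).fderiv

theorem dualityMap_eq_smul_fderiv_norm (hX : FrechetSmooth X) (hp : p ≠ 0) {x : X} (hx : x ≠ 0) :
    dualityMap p x = ‖x‖ ^ (p - 1) • fderiv ℝ (fun y : X => ‖y‖) x := by
  rw [dualityMap, (((hX x hx).hasFDerivAt.rpow_const (.inl (norm_ne_zero_iff.2 hx))).const_mul
    (1 / p)).fderiv, smul_smul, one_div, ← mul_assoc, inv_mul_cancel₀ hp, one_mul]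

theorem dualityMap_apply_self (hX : FrechetSmooth X) (hp : 1 < p) (x : X) :
    dualityMap p x x = ‖x‖ ^ p := by
  have hp0 : p ≠ 0 := by positivity
  rcases eq_or_ne x 0 with rfl | hx
  · simp [hp0]
  · rw [dualityMap_eq_smul_fderiv_norm hX hp0 hx, smul_apply, (hX x hx).fderiv_norm_self,
      smul_eq_mul, ← rpow_eq_rpow_sub_one_mul hp0 (norm_nonneg x)]

theorem dualityMap_apply_le (hX : FrechetSmooth X) (hp : 1 < p) (x y : X) :
    dualityMap p x y ≤ ‖x‖ ^ (p - 1) * ‖y‖ := by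
  rcases eq_or_ne x 0 with rfl | hx
  · rw [dualityMap_zero hp, zero_apply]
    positivity
  · rw [dualityMap_eq_smul_fderiv_norm hX (by positivity) hx, smul_apply, smul_eq_mul]
    gcongr
    have norm_le : ‖fderiv ℝ (fun y : X => ‖y‖) x‖ ≤ 1 :=
      norm_fderiv_le_of_lipschitz ℝ (lipschitzWith_one_norm (E := X))
    simpa using (le_abs_self _).trans (ContinuousLinearMap.le_of_opNorm_le _ norm_le y)

end Smoothness

section BregmanDistance

variable {p : ℝ}

theorem bregmanDist_self (x : X) : bregmanDist p x x = 0 := by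
  rw [bregmanDist, sub_self, sub_self, map_zero, sub_zero]

theorem bregmanDist_eq_add_add (m y x : X) :
    bregmanDist p m x =
      bregmanDist p m y + bregmanDist p y x + (dualityMap p y - dualityMap p x) (m - y) := by
  have split : dualityMap p x (m - x) = dualityMap p x (m - y) + dualityMap p x (y - x) := by
    rw [← map_add, sub_add_sub_cancel]
  rw [bregmanDist, bregmanDist, bregmanDist, split, sub_apply]
  ring

theorem bregmanDist_eq (hX : FrechetSmooth X) (hp : 1 < p) (x y : X) :
    bregmanDist p x y = 1 / p * ‖x‖ ^ p + (1 - 1 / p) * ‖y‖ ^ p - dualityMap p y x := by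
  rw [bregmanDist, map_sub, dualityMap_apply_self hX hp]
  ring

theorem bregmanDist_nonneg (hX : FrechetSmooth X) (hp : 1 < p) (x y : X) :
    0 ≤ bregmanDist p x y := by
  have tangent := rpow_add_mul_sub_le_rpow hp (norm_nonneg x) (norm_nonneg y)
  have norm_rpow := rpow_eq_rpow_sub_one_mul (show p ≠ 0 by positivity) (norm_nonneg y)
  refine (mul_nonneg_iff_of_pos_left (show 0 < p by positivity)).1 ?_
  calc 0 ≤ ‖x‖ ^ p + (p - 1) * ‖y‖ ^ p - p * (‖y‖ ^ (p - 1) * ‖x‖) := by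
        linear_combination tangent - p * norm_rpow
    _ ≤ ‖x‖ ^ p + (p - 1) * ‖y‖ ^ p - p * dualityMap p y x := by
        gcongr
        exact dualityMap_apply_le hX hp y x
    _ = p * bregmanDist p x y := by
        rw [bregmanDist_eq hX hp]
        field_simp

theorem continuous_bregmanDist_left (hp : 0 ≤ p) (x : X) :
    Continuous fun m => bregmanDist p m x := by
  have : Continuous fun m : X => ‖m‖ ^ p := continuous_norm.rpow_const fun _ => .inr hp
  unfold bregmanDist
  fun_prop

theorem hasFDerivAt_bregmanDist_left (hX : FrechetSmooth X) (hp : 1 < p) (y x : X) :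
    HasFDerivAt (fun m => bregmanDist p m x) (dualityMap p y - dualityMap p x) y :=
  ((hasFDerivAt_dualityMap hX hp y).sub_const _).sub
    ((dualityMap p x).hasFDerivAt.comp y ((hasFDerivAt_id y).sub_const x))

theorem tendsto_bregmanDist_cobounded (hp : 1 < p) (x : X) :
    Tendsto (fun m => bregmanDist p m x) (Bornology.cobounded X) atTop := by
  have growth : Tendsto (fun t : ℝ => t * (1 / p * t ^ (p - 1) - ‖dualityMap p x‖)) atTop atTop :=
    tendsto_id.atTop_mul_atTop₀ <| tendsto_atTop_add_const_right _ _ <|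
      (tendsto_rpow_atTop (sub_pos.2 hp)).const_mul_atTop (by positivity)
  refine tendsto_atTop_mono ?_ (tendsto_atTop_add_const_right _ (bregmanDist p 0 x)
    (growth.comp tendsto_norm_cobounded_atTop))
  intro m
  have apply_le : dualityMap p x m ≤ ‖dualityMap p x‖ * ‖m‖ :=
    (le_abs_self _).trans ((dualityMap p x).le_opNorm m)
  have hp0 : p ≠ 0 := by positivity
  have := rpow_eq_rpow_sub_one_mul hp0 (norm_nonneg m)
  simp only [Function.comp_apply, bregmanDist, map_sub, map_zero, norm_zero, Real.zero_rpow hp0]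
  linear_combination apply_le - 1 / p * this

theorem isBounded_setOf_bregmanDist_le (hp : 1 < p) (x : X) (c : ℝ) :
    Bornology.IsBounded {m | bregmanDist p m x ≤ c} := by
  rw [← Bornology.isCobounded_compl_iff]
  filter_upwards [(tendsto_bregmanDist_cobounded hp x).eventually_gt_atTop c] with m hm
  exact hm.not_ge

theorem bregmanDist_add_sub_midpoint (u v x : X) :
    bregmanDist p u x + bregmanDist p v x - 2 * bregmanDist p (midpoint ℝ u v) x =
      1 / p * (‖u‖ ^ p + ‖v‖ ^ p - 2 * ‖midpoint ℝ u v‖ ^ p) := by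
  have apply_midpoint : 2 * dualityMap p x (midpoint ℝ u v) =
      dualityMap p x u + dualityMap p x v := by
    rw [← smul_eq_mul, ← map_smul, two_smul, midpoint_add_self, map_add]
  simp only [bregmanDist, map_sub]
  linear_combination apply_midpoint

variable (X) in
theorem exists_mul_powModConvex_le_midpoint_gap {R : ℝ} (hp : 1 < p) (hR : 0 < R) :
    ∃ K > 0, ∀ u v x : X, ‖u‖ ≤ R → ‖v‖ ≤ R → K * powModConvex X p R ‖u - v‖ ≤
      bregmanDist p u x + bregmanDist p v x - 2 * bregmanDist p (midpoint ℝ u v) x := by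
  obtain ⟨K, hK, gap⟩ := exists_two_mul_norm_midpoint_rpow_add_le X hp hR
  refine ⟨1 / p * K, by positivity, fun u v x hu hv => ?_⟩
  rw [bregmanDist_add_sub_midpoint, mul_assoc, norm_sub_rev]
  gcongr
  linarith [gap u v hu hv]

theorem midpoint_gap_le_bregmanDist (hX : FrechetSmooth X) (hp : 1 < p) (u v : X) :
    bregmanDist p u v + bregmanDist p v v - 2 * bregmanDist p (midpoint ℝ u v) v ≤
      bregmanDist p u v := by
  rw [bregmanDist_self]
  linarith [bregmanDist_nonneg hX hp (midpoint ℝ u v) v]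

theorem PowerConvex.exists_mul_rpow_le_bregmanDist {ρ : ℝ} {s : Set X} (h : PowerConvex X ρ)
    (hX : FrechetSmooth X) (hp : 1 < p) (hs : Bornology.IsBounded s) :
    ∃ K > 0, ∀ u ∈ s, ∀ v ∈ s, K * ‖u - v‖ ^ (p + 1 + ρ) ≤ bregmanDist p u v := by
  obtain ⟨R, hR, hsR⟩ := hs.exists_pos_norm_le
  obtain ⟨c, hc, power_le⟩ := h.mul_rpow_le_powModConvex hp hR
  obtain ⟨K, hK, gap⟩ := exists_mul_powModConvex_le_midpoint_gap X hp hR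
  refine ⟨K * c, by positivity, fun u hu v hv => ?_⟩
  have huv : ‖u - v‖ ∈ Set.Icc 0 (2 * R) :=
    ⟨norm_nonneg _, by linarith [norm_sub_le u v, hsR u hu, hsR v hv]⟩
  calc K * c * ‖u - v‖ ^ (p + 1 + ρ) ≤ K * powModConvex X p R ‖u - v‖ := by
        rw [mul_assoc]
        gcongr
        exact power_le _ huv
    _ ≤ bregmanDist p u v :=
        (gap u v v (hsR u hu) (hsR v hv)).trans (midpoint_gap_le_bregmanDist hX hp u v)

section Convergence

variable {ι : Type*} {l : Filter ι} {s : Set X} {u v : ι → X}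

theorem UnifConvex.tendsto_norm_sub_of_midpoint_gap_le (hconv : UnifConvex X) (hp : 1 < p)
    (hs : Bornology.IsBounded s) (hu : ∀ i, u i ∈ s) (hv : ∀ i, v i ∈ s) {x : ι → X} {ε : ι → ℝ}
    (hε : Tendsto ε l (𝓝 0))
    (hle : ∀ i, bregmanDist p (u i) (x i) + bregmanDist p (v i) (x i)
      - 2 * bregmanDist p (midpoint ℝ (u i) (v i)) (x i) ≤ ε i) :
    Tendsto (fun i => ‖u i - v i‖) l (𝓝 0) := by
  obtain ⟨R, hR, hsR⟩ := hs.exists_pos_norm_le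
  obtain ⟨K, hK, gap⟩ := exists_mul_powModConvex_le_midpoint_gap X hp hR
  refine hconv.tendsto_zero_of_powModConvex (p := p) (R := R) (by positivity) (fun i => ?_) ?_
  · exact ⟨norm_nonneg _, by linarith [norm_sub_le (u i) (v i), hsR _ (hu i), hsR _ (hv i)]⟩
  · have hεK : Tendsto (fun i => ε i / K) l (𝓝 0) := by simpa using hε.div_const K
    refine squeeze_zero (fun i => powModConvex_nonneg (norm_nonneg _)) (fun i => ?_) hεK
    rw [le_div_iff₀' hK]
    exact (gap _ _ _ (hsR _ (hu i)) (hsR _ (hv i))).trans (hle i)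

theorem UnifConvex.tendsto_norm_sub_of_bregmanDist (hconv : UnifConvex X) (hX : FrechetSmooth X)
    (hp : 1 < p) (hs : Bornology.IsBounded s) (hu : ∀ i, u i ∈ s) (hv : ∀ i, v i ∈ s)
    (h : Tendsto (fun i => bregmanDist p (u i) (v i)) l (𝓝 0)) :
    Tendsto (fun i => ‖u i - v i‖) l (𝓝 0) :=
  hconv.tendsto_norm_sub_of_midpoint_gap_le hp hs hu hv h
    fun i => midpoint_gap_le_bregmanDist hX hp (u i) (v i)

theorem UnifConvex.eq_of_bregmanDist_eq_zero (hconv : UnifConvex X) (hX : FrechetSmooth X)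
    (hp : 1 < p) {x y : X} (h : bregmanDist p x y = 0) : x = y := by
  have := hconv.tendsto_norm_sub_of_bregmanDist (u := fun _ : ℕ => x) (v := fun _ => y)
    (l := atTop) hX hp (Set.toFinite {x, y}).isBounded (by simp) (by simp) (by simp [h])
  exact norm_sub_eq_zero_iff.1 (tendsto_const_nhds_iff.1 this)

theorem UnifConvex.tendsto_of_bregmanDist {z : X} (hconv : UnifConvex X) (hX : FrechetSmooth X)
    (hp : 1 < p) (hv : Bornology.IsBounded (Set.range v))
    (h : Tendsto (fun i => bregmanDist p z (v i)) l (𝓝 0)) : Tendsto v l (𝓝 z) := by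
  refine tendsto_iff_norm_sub_tendsto_zero.2 ?_
  simp only [norm_sub_rev _ z]
  exact hconv.tendsto_norm_sub_of_bregmanDist hX hp (hv.insert z) (fun _ => Set.mem_insert z _)
    (fun i => Set.mem_insert_of_mem z (Set.mem_range_self i)) h

end Convergence

theorem PowerConvex.decaysGeometrically_norm_sub {ρ : ℝ} {x : ℕ → X} {z : X}
    (h : PowerConvex X ρ) (hX : FrechetSmooth X) (hp : 1 < p)
    (hx : Bornology.IsBounded (Set.range x))
    (hD : DecaysGeometrically fun n => bregmanDist p z (x n)) :
    DecaysGeometrically fun n => ‖z - x n‖ := by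
  obtain ⟨K, hK, power_le⟩ := h.exists_mul_rpow_le_bregmanDist hX hp (hx.insert z)
  have hρ : 0 < ρ := h.exponent_pos
  exact hD.of_mul_rpow_le hK (by positivity) (fun n => norm_nonneg _) fun n =>
    power_le z (Set.mem_insert z _) (x n) (Set.mem_insert_of_mem z (Set.mem_range_self n))

end BregmanDistance

section BregmanProjection

variable {p : ℝ} {M P : Submodule ℝ X} {x y z : X}

theorem exists_isMinOn_bregmanDist [CompleteSpace X] (hconv : UnifConvex X) (hX : FrechetSmooth X)
    (hp : 1 < p) {S : Set X} (hS : S.Nonempty) (hS_closed : IsClosed S) (hS_convex : Convex ℝ S)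
    (x : X) : ∃ y ∈ S, IsMinOn (fun m => bregmanDist p m x) S y := by
  set φ : X → ℝ := fun m => bregmanDist p m x
  have bddBelow : BddBelow (φ '' S) :=
    ⟨0, Set.forall_mem_image.2 fun m _ => bregmanDist_nonneg hX hp m x⟩
  have sInf_le {m : X} (hm : m ∈ S) : sInf (φ '' S) ≤ φ m :=
    csInf_le bddBelow (Set.mem_image_of_mem φ hm)
  obtain ⟨a, a_anti, a_tendsto, a_mem⟩ := exists_seq_tendsto_sInf (hS.image φ) bddBelow
  choose u hu φ_u using a_mem
  have excess_tendsto :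
      Tendsto (fun n : ℕ × ℕ => a n.1 + a n.2 - 2 * sInf (φ '' S)) atTop (𝓝 0) := by
    rw [← prod_atTop_atTop_eq]
    simpa [← two_mul] using ((a_tendsto.comp tendsto_fst).add
      (a_tendsto.comp tendsto_snd)).sub_const (2 * sInf (φ '' S))
  have cauchy : CauchySeq u := by
    rw [cauchySeq_iff_tendsto_dist_atTop_0]
    simp only [dist_eq_norm]
    have u_mem (n : ℕ) : u n ∈ {m | φ m ≤ φ (u 0)} :=
      (φ_u n).trans_le ((a_anti n.zero_le).trans_eq (φ_u 0).symm)
    refine hconv.tendsto_norm_sub_of_midpoint_gap_le hp (isBounded_setOf_bregmanDist_le hp x _)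
      (fun n => u_mem n.1) (fun n => u_mem n.2) (x := fun _ => x) excess_tendsto fun n => ?_
    linarith [φ_u n.1, φ_u n.2, sInf_le (hS_convex.midpoint_mem (hu n.1) (hu n.2))]
  obtain ⟨y, hy⟩ := cauchySeq_tendsto_of_complete cauchy
  have φ_y : φ y = sInf (φ '' S) := by
    have φ_continuous : Continuous φ := continuous_bregmanDist_left (by positivity) x
    refine tendsto_nhds_unique ((φ_continuous.tendsto y).comp hy) ?_
    simpa only [Function.comp_def, φ_u] using a_tendsto
  exact ⟨y, hS_closed.mem_of_tendsto hy (.of_forall hu), fun m hm => φ_y.trans_le (sInf_le hm)⟩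

/-- The first-order optimality condition for `y` to minimise `m ↦ D_p(m, x)` over the subspace
`M`. Unlike `bregmanProj`, it involves no choice of a minimiser, so that its algebraic consequences
hold without any assumption ensuring that a minimiser exists. -/
def IsBregmanProj (p : ℝ) (M : Submodule ℝ X) (x y : X) : Prop :=
  y ∈ M ∧ ∀ m ∈ M, dualityMap p y m = dualityMap p x m

theorem IsBregmanProj.refl (hx : x ∈ M) : IsBregmanProj p M x x :=
  ⟨hx, fun _ _ => rfl⟩

theorem IsBregmanProj.of_le (hz : IsBregmanProj p P x z) (hy : IsBregmanProj p M x y)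
    (hPM : P ≤ M) : IsBregmanProj p P y z :=
  ⟨hz.1, fun m hm => (hz.2 m hm).trans (hy.2 m (hPM hm)).symm⟩

theorem IsBregmanProj.bregmanDist_eq_add (h : IsBregmanProj p M x y) {m : X} (hm : m ∈ M) :
    bregmanDist p m x = bregmanDist p m y + bregmanDist p y x := by
  rw [bregmanDist_eq_add_add m y x, sub_apply, h.2 _ (M.sub_mem hm h.1), sub_self, add_zero]

theorem IsBregmanProj.norm_le (h : IsBregmanProj p M x y) (hX : FrechetSmooth X) (hp : 1 < p) :
    ‖y‖ ≤ ‖x‖ := by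
  have hp0 : p ≠ 0 := by positivity
  have pythagoras := h.bregmanDist_eq_add M.zero_mem
  simp only [bregmanDist_eq hX hp 0, norm_zero, Real.zero_rpow hp0, map_zero] at pythagoras
  have : 0 < 1 - 1 / p := sub_pos.2 ((div_lt_one (by positivity)).2 hp)
  have rpow_le : ‖y‖ ^ p ≤ ‖x‖ ^ p := by
    refine le_of_mul_le_mul_left ?_ this
    linarith [bregmanDist_nonneg hX hp y x]
  exact (Real.rpow_le_rpow_iff (norm_nonneg y) (norm_nonneg x) (by positivity)).1 rpow_le

theorem IsBregmanProj.unique (h : IsBregmanProj p M x y) (h' : IsBregmanProj p M x z)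
    (hconv : UnifConvex X) (hX : FrechetSmooth X) (hp : 1 < p) : y = z := by
  refine hconv.eq_of_bregmanDist_eq_zero hX hp ((bregmanDist_nonneg hX hp y z).antisymm' ?_)
  linarith [h.bregmanDist_eq_add h'.1, h'.bregmanDist_eq_add h.1, bregmanDist_nonneg hX hp z y]

theorem IsBregmanProj.of_isMinOn (hX : FrechetSmooth X) (hp : 1 < p) (hy : y ∈ M)
    (hmin : IsMinOn (fun m => bregmanDist p m x) M y) : IsBregmanProj p M x y := by
  refine ⟨hy, fun m hm => ?_⟩
  have line_hasDerivAt : HasDerivAt (fun t : ℝ => bregmanDist p (y + t • m) x)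
      ((dualityMap p y - dualityMap p x) m) 0 :=
    (hasFDerivAt_bregmanDist_left hX hp y x).hasLineDerivAt m
  have isLocalMin : IsLocalMin (fun t : ℝ => bregmanDist p (y + t • m) x) 0 :=
    .of_forall fun t => by simpa using hmin (M.add_mem hy (M.smul_mem t hm))
  simpa only [sub_apply, sub_eq_zero] using isLocalMin.hasDerivAt_eq_zero line_hasDerivAt

theorem isBregmanProj_bregmanProj [CompleteSpace X] (hconv : UnifConvex X) (hX : FrechetSmooth X)
    (hp : 1 < p) (hM : IsClosed (M : Set X)) (x : X) :
    IsBregmanProj p M x (bregmanProj p (M : Set X) x) := by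
  obtain ⟨hmem, hmin⟩ := Classical.epsilon_spec
    (exists_isMinOn_bregmanDist hconv hX hp ⟨0, M.zero_mem⟩ hM M.convex x)
  exact .of_isMinOn hX hp hmem hmin

theorem IsBregmanProj.bregmanDistSet_eq [CompleteSpace X] (h : IsBregmanProj p M x y)
    (hconv : UnifConvex X) (hX : FrechetSmooth X) (hp : 1 < p) (hM : IsClosed (M : Set X)) :
    bregmanDistSet p (M : Set X) x = bregmanDist p y x := by
  rw [bregmanDistSet, (isBregmanProj_bregmanProj hconv hX hp hM x).unique h hconv hX hp]

end BregmanProjection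

section BregmanOrbit

variable {p : ℝ} {L : ℕ → Submodule ℝ X} {x : ℕ → X} {z : X}

theorem isBregmanProj_of_orbit {P : Submodule ℝ X}
    (hx : ∀ n, IsBregmanProj p (L n) (x n) (x (n + 1))) (hP : ∀ n, P ≤ L n)
    (hz : IsBregmanProj p P (x 0) z) (n : ℕ) : IsBregmanProj p P (x n) z := by
  induction n with
  | zero => exact hz
  | succ n ih => exact ih.of_le (hx n) (hP n)

theorem isBounded_range_of_orbit (hX : FrechetSmooth X) (hp : 1 < p)
    (hx : ∀ n, IsBregmanProj p (L n) (x n) (x (n + 1))) : Bornology.IsBounded (Set.range x) := by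
  have antitone_norm : Antitone fun n => ‖x n‖ :=
    antitone_nat_of_succ_le fun n => (hx n).norm_le hX hp
  exact isBounded_iff_forall_norm_le.2
    ⟨‖x 0‖, Set.forall_mem_range.2 fun n => antitone_norm n.zero_le⟩

theorem decaysGeometrically_bregmanDist_of_orbit (hX : FrechetSmooth X) (hp : 1 < p)
    (hx : ∀ n, IsBregmanProj p (L n) (x n) (x (n + 1))) (hz : ∀ n, z ∈ L n) {κ : ℝ} (hκ : 0 < κ)
    (h : ∀ n, bregmanDist p z (x (n + 1)) ≤ κ * bregmanDist p (x (n + 2)) (x (n + 1))) :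
    DecaysGeometrically fun n => bregmanDist p z (x n) := by
  refine .of_le_mul (q := κ / (κ + 1))
    ⟨by positivity, (div_lt_one (by positivity)).2 (lt_add_one κ)⟩ fun n => ?_
  rw [div_mul_eq_mul_div, le_div_iff₀ (by positivity)]
  linear_combination h n - (κ + 1) * (hx (n + 1)).bregmanDist_eq_add (hz (n + 1)) +
    bregmanDist_nonneg hX hp (x (n + 2)) (x (n + 1))

end BregmanOrbit

section AlternatingProjections

variable {p : ℝ} {M N : Submodule ℝ X}

/-- The subspace onto which step `n` of the method of alternating projections projects: `M` for
even `n` and `N` for odd `n`. -/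
def alternatingSubspace (M N : Submodule ℝ X) (n : ℕ) : Submodule ℝ X :=
  if Even n then M else N

theorem isClosed_alternatingSubspace (hM : IsClosed (M : Set X)) (hN : IsClosed (N : Set X))
    (n : ℕ) : IsClosed (alternatingSubspace M N n : Set X) := by
  unfold alternatingSubspace
  split_ifs
  exacts [hM, hN]

theorem inf_le_alternatingSubspace (n : ℕ) : M ⊓ N ≤ alternatingSubspace M N n := by
  unfold alternatingSubspace
  split_ifs
  exacts [inf_le_left, inf_le_right]

theorem eq_bregmanProj_alternatingSubspace {x : ℕ → X}
    (hodd : ∀ n, x (2 * n + 1) = bregmanProj p (M : Set X) (x (2 * n)))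
    (heven : ∀ n, x (2 * n + 2) = bregmanProj p (N : Set X) (x (2 * n + 1))) (n : ℕ) :
    x (n + 1) = bregmanProj p (alternatingSubspace M N n : Set X) (x n) := by
  obtain ⟨k, rfl | rfl⟩ := n.even_or_odd'
  · simpa [alternatingSubspace] using hodd k
  · simpa [alternatingSubspace] using heven k

theorem max_bregmanDistSet_le_of_mem_alternatingSubspace [CompleteSpace X] (hconv : UnifConvex X)
    (hX : FrechetSmooth X) (hp : 1 < p) (hM : IsClosed (M : Set X)) (hN : IsClosed (N : Set X))
    {y : X} {n : ℕ} (hy : y ∈ alternatingSubspace M N n) :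
    max (bregmanDistSet p (M : Set X) y) (bregmanDistSet p (N : Set X) y) ≤
      bregmanDistSet p (alternatingSubspace M N (n + 1) : Set X) y := by
  have nonneg (S : Set X) : 0 ≤ bregmanDistSet p S y := bregmanDist_nonneg hX hp _ _
  have eq_zero {K : Submodule ℝ X} (hK : IsClosed (K : Set X)) (hyK : y ∈ K) :
      bregmanDistSet p (K : Set X) y = 0 := by
    rw [(IsBregmanProj.refl hyK).bregmanDistSet_eq hconv hX hp hK, bregmanDist_self]
  unfold alternatingSubspace at hy ⊢
  by_cases hn : Even n
  · rw [if_pos hn] at hy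
    rw [if_neg (Nat.even_add_one.not.2 (not_not.2 hn)), eq_zero hM hy, max_eq_right (nonneg _)]
  · rw [if_neg hn] at hy
    rw [if_pos (Nat.even_add_one.2 hn), eq_zero hN hy, max_eq_left (nonneg _)]

end AlternatingProjections

theorem statement14_general [CompleteSpace X] (hconv : UnifConvex X) (hX : FrechetSmooth X)
    {p : ℝ} (hp : 1 < p) {M N : Submodule ℝ X} (hM : IsClosed (M : Set X))
    (hN : IsClosed (N : Set X)) (hreg : BoundedlyLinearBregmanRegular p M N) {x : ℕ → X}
    (hodd : ∀ n, x (2 * n + 1) = bregmanProj p (M : Set X) (x (2 * n)))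
    (heven : ∀ n, x (2 * n + 2) = bregmanProj p (N : Set X) (x (2 * n + 1))) :
    Tendsto x atTop (𝓝 (bregmanProj p ((M ⊓ N : Submodule ℝ X) : Set X) (x 0))) ∧
    (DecaysGeometrically fun n =>
      bregmanDist p (bregmanProj p ((M ⊓ N : Submodule ℝ X) : Set X) (x 0)) (x n)) ∧
    ∀ ρ : ℝ, PowerConvex X ρ → DecaysGeometrically fun n =>
      ‖bregmanProj p ((M ⊓ N : Submodule ℝ X) : Set X) (x 0) - x n‖ := by
  have hL := isClosed_alternatingSubspace hM hN
  have hMN : IsClosed ((M ⊓ N : Submodule ℝ X) : Set X) := hM.inter hN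
  set z := bregmanProj p ((M ⊓ N : Submodule ℝ X) : Set X) (x 0)
  have orbit (n : ℕ) : IsBregmanProj p (alternatingSubspace M N n) (x n) (x (n + 1)) :=
    eq_bregmanProj_alternatingSubspace hodd heven n ▸
      isBregmanProj_bregmanProj hconv hX hp (hL n) (x n)
  have proj_eq (n : ℕ) : IsBregmanProj p (M ⊓ N) (x n) z :=
    isBregmanProj_of_orbit orbit inf_le_alternatingSubspace
      (isBregmanProj_bregmanProj hconv hX hp hMN _) n
  have bounded := isBounded_range_of_orbit hX hp orbit
  obtain ⟨κ, hκ, regular⟩ := hreg _ bounded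
  have decays : DecaysGeometrically fun n => bregmanDist p z (x n) := by
    refine decaysGeometrically_bregmanDist_of_orbit hX hp orbit
      (fun n => inf_le_alternatingSubspace n (proj_eq 0).1) hκ fun n => ?_
    rw [← (proj_eq _).bregmanDistSet_eq hconv hX hp hMN,
      ← (orbit _).bregmanDistSet_eq hconv hX hp (hL _)]
    refine (regular _ (Set.mem_range_self _)).trans ?_
    gcongr
    exact max_bregmanDistSet_le_of_mem_alternatingSubspace hconv hX hp hM hN (orbit n).1
  exact ⟨hconv.tendsto_of_bregmanDist hX hp bounded
      (decays.tendsto_zero fun n => bregmanDist_nonneg hX hp _ _),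
    decays, fun ρ hρ => hρ.decaysGeometrically_norm_sub hX hp bounded decays⟩

theorem statement14 {X : Type*} [NormedAddCommGroup X] [NormedSpace ℝ X] [CompleteSpace X]
    (hconv : UnifConvex X) (hsmooth : UnifSmooth X) (p : ℝ) (hp : 1 < p)
    (M N : Submodule ℝ X) (hM : IsClosed (M : Set X)) (hN : IsClosed (N : Set X))
    (hreg : BoundedlyLinearBregmanRegular p M N)
    (a : X) (x : ℕ → X) (hx0 : x 0 = a)
    (hodd : ∀ n : ℕ, x (2 * n + 1) = bregmanProj p (M : Set X) (x (2 * n)))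
    (heven : ∀ n : ℕ, x (2 * n + 2) = bregmanProj p (N : Set X) (x (2 * n + 1))) :
    Filter.Tendsto x Filter.atTop
      (𝓝 (bregmanProj p ((M ⊓ N : Submodule ℝ X) : Set X) a)) ∧
    ∀ ρ σ : ℝ, PowerConvex X ρ → PowerSmooth X σ → σ ≤ p → p ≤ ρ →
      (∃ C > (0 : ℝ), ∃ q ∈ Set.Ioo (0 : ℝ) 1, ∀ n : ℕ,
        bregmanDist p (bregmanProj p ((M ⊓ N : Submodule ℝ X) : Set X) a) (x n) ≤ C * q ^ n) ∧
      (∃ C' > (0 : ℝ), ∃ q' ∈ Set.Ioo (0 : ℝ) 1, ∀ n : ℕ,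
        ‖bregmanProj p ((M ⊓ N : Submodule ℝ X) : Set X) a - x n‖ ≤ C' * q' ^ n) := by
  subst hx0
  obtain ⟨tendsto, bregman_rate, norm_rate⟩ :=
    statement14_general hconv hsmooth.frechetSmooth hp hM hN hreg hodd heven
  exact ⟨tendsto, fun ρ _ hρ _ _ _ => ⟨bregman_rate, norm_rate ρ hρ⟩⟩
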